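/- (Local solvability and stability by Weyl coefficients.) Let M_1,…,M_{2l} be the Weyl coefficients of a system with a_n ≠ 0 for n = 1,…,l−1 and a_l = 1. Then there exist ε > 0 and C > 0, depending only on a_1,…,a_l and b_1,…,b_l, such that for any complex numbers M̃_2,…,M̃_{2l} with δ := max_{2 ≤ k ≤ 2l} |M_k − M̃_k| ≤ ε, there exist unique complex numbers ã_1,…,ã_l, b̃_1,…,b̃_l with ã_n ≠ 0 for n = 1,…,l−1 and ã_l = 1 whose Weyl coefficients are 1, M̃_2,…,M̃_{2l}; moreover |a_n − ã_n| ≤ Cδ and |b_n − b̃_n| ≤ Cδ for n = 1,…,l. -/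

import Mathlib

open Polynomial

/-- `M 1, …, M (2l)` are the Weyl coefficients of the system with coefficients `a`, `b`:
there are polynomial solutions `P`, `Q` of the difference equation with the standard initial
conditions such that `λ^{2l} Q (l+1) + P (l+1) Σ_{k=1}^{2l} M k λ^{2l-k}` has degree
at most `l - 1`. -/
def IsWeylCoeffs (l : ℕ) (a b M : ℕ → ℂ) : Prop :=
  ∃ P Q : ℕ → Polynomial ℂ,
    P 0 = 0 ∧ P 1 = 1 ∧ Q 0 = 1 ∧ Q 1 = 0 ∧
    (∀ n, 1 ≤ n → n ≤ l →
      C (a n) * P (n + 1) + C (b n) * P n + P (n - 1) = X * P n) ∧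
    (∀ n, 1 ≤ n → n ≤ l →
      C (a n) * Q (n + 1) + C (b n) * Q n + Q (n - 1) = X * Q n) ∧
    (X ^ (2 * l) * Q (l + 1) +
      P (l + 1) * ∑ k ∈ Finset.Icc 1 (2 * l), C (M k) * X ^ (2 * l - k)).degree
      ≤ ((l - 1 : ℕ) : WithBot ℕ)

/-!
In the variable `z = 1/λ`, suitably normalised solutions of the difference equation are power
series, and the degree condition on `λ^{2l} Q_{l+1} + P_{l+1} ∑ M_k λ^{2l-k}` says that
`M_1, …, M_{2l}` are the first `2l` Taylor coefficients of the finite continued fraction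
`w_1 = 1 / (1 - b_1 z - a_1 z² / (1 - b_2 z - a_2 z² / ⋯))`: in fact
`w_1 = -λ Q_{l+1} / P_{l+1}`.

Since `1 / w_n = 1 - b_n z - a_n z² w_{n+1}`, the numbers `b_n`, `a_n` and the series `w_{n+1}` can
be read off `w_n` as long as `a_n ≠ 0`. Running this recursion on an arbitrary series decides
whether it agrees to order `2l` with such a continued fraction, and then yields its entries. Only
power series inversion and division by nonzero numbers are involved, so the entries are
differentiable functions of the `M_k`. Under small perturbations the `a_n` therefore stay nonzero
and all entries move at most linearly.
-/

open scoped PowerSeries Topology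

section JFraction

variable {K : Type*} [Field K]

/-- The finite J-fraction `1 / (1 - b_n z - a_n z² / (1 - b_{n+1} z - a_{n+1} z² / ⋯))` with `l`
levels, the second argument being the starting index `n`. The entry `a_{n+l-1}` of the last level
is multiplied by `0`. -/
noncomputable def jFraction (a b : ℕ → K) : ℕ → ℕ → K⟦X⟧
  | 0, _ => 0
  | l + 1, n => (1 - PowerSeries.C (b n) * PowerSeries.X -
      PowerSeries.C (a n) * PowerSeries.X ^ 2 * jFraction a b l (n + 1))⁻¹

/-- Coefficient stripping: the series `w'` with constant term `1` such that
`1 / f = β₀ + β₁ z + β₂ z² w'`, i.e. the tail of `f` viewed as a J-fraction. It is `0` when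
`β₂ = 0`. -/
noncomputable def coeffStrip (f : K⟦X⟧) : K⟦X⟧ :=
  PowerSeries.mk fun k ↦ PowerSeries.coeff (k + 2) f⁻¹ / PowerSeries.coeff 2 f⁻¹

/-- The diagonal entry `b_{i+1}` of `f` viewed as the J-fraction of `(a_1, a_2, …; b_1, b_2, …)`,
indexed from `0`. -/
noncomputable def strippedDiag (f : K⟦X⟧) (i : ℕ) : K :=
  -PowerSeries.coeff 1 (coeffStrip^[i] f)⁻¹

/-- The off-diagonal entry `a_{i+1}` of `f` viewed as the J-fraction of
`(a_1, a_2, …; b_1, b_2, …)`, indexed from `0`. -/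
noncomputable def strippedOffDiag (f : K⟦X⟧) (i : ℕ) : K :=
  -PowerSeries.coeff 2 (coeffStrip^[i] f)⁻¹

theorem forall_coeff_eq_iff_X_pow_dvd_sub {R : Type*} [CommRing R] (N : ℕ) (f g : R⟦X⟧) :
    (∀ k < N, PowerSeries.coeff k f = PowerSeries.coeff k g) ↔ PowerSeries.X ^ N ∣ f - g := by
  simp [PowerSeries.X_pow_dvd_iff, sub_eq_zero]

theorem forall_coeff_inv_eq_iff {f g : K⟦X⟧} (hf : PowerSeries.constantCoeff f ≠ 0)
    (hg : PowerSeries.constantCoeff g ≠ 0) (N : ℕ) :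
    (∀ k < N, PowerSeries.coeff k f⁻¹ = PowerSeries.coeff k g⁻¹) ↔
      ∀ k < N, PowerSeries.coeff k f = PowerSeries.coeff k g := by
  have hf' := PowerSeries.mul_inv_cancel f hf
  have hg' := PowerSeries.mul_inv_cancel g hg
  simp_rw [forall_coeff_eq_iff_X_pow_dvd_sub]
  constructor <;> rintro ⟨c, hc⟩
  · exact ⟨-(c * f * g), by linear_combination (-f * g) * hc + g * hf' - f * hg'⟩
  · exact ⟨-(c * f⁻¹ * g⁻¹), by linear_combination (-f⁻¹ * g⁻¹) * hc + g⁻¹ * hf' - f⁻¹ * hg'⟩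

variable (a b : ℕ → K)

theorem constantCoeff_jFraction_succ (l n : ℕ) :
    PowerSeries.constantCoeff (jFraction a b (l + 1) n) = 1 := by
  simp [jFraction]

theorem inv_jFraction_succ (l n : ℕ) :
    (jFraction a b (l + 1) n)⁻¹ =
      1 - PowerSeries.C (b n) * PowerSeries.X -
      PowerSeries.C (a n) * PowerSeries.X ^ 2 * jFraction a b l (n + 1) := by
  rw [PowerSeries.inv_eq_iff_mul_eq_one (by simp [constantCoeff_jFraction_succ]), mul_comm]
  exact PowerSeries.inv_mul_cancel _ (by simp)

theorem coeff_one_inv_jFraction_succ (l n : ℕ) :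
    PowerSeries.coeff 1 (jFraction a b (l + 1) n)⁻¹ = -b n := by
  simp [inv_jFraction_succ, PowerSeries.coeff_one, PowerSeries.coeff_X_pow_mul', mul_assoc]

theorem coeff_add_two_inv_jFraction_succ (l n k : ℕ) :
    PowerSeries.coeff (k + 2) (jFraction a b (l + 1) n)⁻¹ =
      -(a n * PowerSeries.coeff k (jFraction a b l (n + 1))) := by
  simp [inv_jFraction_succ, PowerSeries.coeff_one, PowerSeries.coeff_X_pow_mul, mul_assoc]

theorem constantCoeff_coeffStrip {f : K⟦X⟧} (hf : PowerSeries.coeff 2 f⁻¹ ≠ 0) :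
    PowerSeries.constantCoeff (coeffStrip f) = 1 := by
  simp [coeffStrip, ← PowerSeries.coeff_zero_eq_constantCoeff_apply, hf]

theorem forall_coeff_jFraction_succ_eq_iff (l n : ℕ) (f : K⟦X⟧) :
    (∀ k < 2 * (l + 1), PowerSeries.coeff k (jFraction a b (l + 1) n) = PowerSeries.coeff k f) ↔
      PowerSeries.constantCoeff f = 1 ∧ b n = -PowerSeries.coeff 1 f⁻¹ ∧
        ∀ k < 2 * l, a n * PowerSeries.coeff k (jFraction a b l (n + 1)) =
          -PowerSeries.coeff (k + 2) f⁻¹ := by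
  have hw := constantCoeff_jFraction_succ a b l n
  by_cases hf : PowerSeries.constantCoeff f = 1
  · rw [← forall_coeff_inv_eq_iff (by simp [hw]) (by simp [hf]), mul_add_one,
      Nat.forall_lt_succ_left, Nat.forall_lt_succ_left]
    simp [hf, hw, coeff_one_inv_jFraction_succ, coeff_add_two_inv_jFraction_succ, neg_eq_iff_eq_neg]
  · simp only [hf, false_and, iff_false]
    exact fun h ↦ hf (by simpa [hw] using (h 0 (by omega)).symm)

theorem forall_coeff_jFraction_add_two_eq_iff {l n : ℕ} (ha : a n ≠ 0) (f : K⟦X⟧) :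
    (∀ k < 2 * (l + 2), PowerSeries.coeff k (jFraction a b (l + 2) n) = PowerSeries.coeff k f) ↔
      PowerSeries.constantCoeff f = 1 ∧ b n = -PowerSeries.coeff 1 f⁻¹ ∧
        a n = -PowerSeries.coeff 2 f⁻¹ ∧ ∀ k < 2 * (l + 1),
          PowerSeries.coeff k (jFraction a b (l + 1) (n + 1)) =
            PowerSeries.coeff k (coeffStrip f) := by
  rw [forall_coeff_jFraction_succ_eq_iff]
  refine and_congr_right fun _ ↦ and_congr_right fun _ ↦ ⟨fun h ↦ ?_, fun ⟨ha2, h⟩ k hk ↦ ?_⟩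
  · have ha2 : a n = -PowerSeries.coeff 2 f⁻¹ := by
      simpa [constantCoeff_jFraction_succ] using h 0 (by omega)
    refine ⟨ha2, fun k hk ↦ mul_left_cancel₀ ha ((h k hk).trans ?_)⟩
    rw [ha2, neg_ne_zero] at ha
    simp [coeffStrip, ha2, mul_div_cancel₀ _ ha]
  · rw [h k hk, ha2]
    rw [ha2, neg_ne_zero] at ha
    simp [coeffStrip, mul_div_cancel₀ _ ha]

theorem forall_coeff_jFraction_eq_iff {l n : ℕ} (ha : ∀ i < l, a (n + i) ≠ 0) (f : K⟦X⟧) :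
    (∀ k < 2 * (l + 1), PowerSeries.coeff k (jFraction a b (l + 1) n) = PowerSeries.coeff k f) ↔
      PowerSeries.constantCoeff f = 1 ∧ (∀ i < l, a (n + i) = strippedOffDiag f i) ∧
        ∀ i < l + 1, b (n + i) = strippedDiag f i := by
  induction l generalizing n f with
  | zero =>
    rw [forall_coeff_jFraction_succ_eq_iff]
    simp [strippedDiag]
  | succ l ih =>
    have ha0 : a n ≠ 0 := ha 0 (by omega)
    have key := ih (n := n + 1)
      (fun i hi ↦ by simpa only [add_assoc, add_comm 1] using ha (i + 1) (by omega)) (coeffStrip f)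
    rw [forall_coeff_jFraction_add_two_eq_iff a b ha0, Nat.forall_lt_succ_left,
      Nat.forall_lt_succ_left (n := l + 1)]
    simp only [strippedDiag, strippedOffDiag, Function.iterate_zero, id, add_zero,
      Function.iterate_succ_apply, add_assoc, add_comm 1] at key ⊢
    constructor
    · rintro ⟨hf, hb, h2, h⟩
      obtain ⟨-, h⟩ := key.1 h
      exact ⟨hf, ⟨h2, h.1⟩, hb, h.2⟩
    · rintro ⟨hf, ⟨h2, hA⟩, hb, hB⟩
      have h2' : PowerSeries.coeff 2 f⁻¹ ≠ 0 := by simpa [h2] using ha0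
      exact ⟨hf, hb, h2, key.2 ⟨constantCoeff_coeffStrip h2', hA, hB⟩⟩

section Differentiability

variable {𝕜 E : Type*} [NontriviallyNormedField 𝕜] [NormedAddCommGroup E] [NormedSpace 𝕜 E]
  {f : E → 𝕜⟦X⟧} {x : E}

theorem differentiableAt_coeff_inv
    (hf : ∀ k, DifferentiableAt 𝕜 (fun y ↦ PowerSeries.coeff k (f y)) x)
    (h0 : PowerSeries.constantCoeff (f x) ≠ 0) (k : ℕ) :
    DifferentiableAt 𝕜 (fun y ↦ PowerSeries.coeff k (f y)⁻¹) x := by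
  have hf0 : DifferentiableAt 𝕜 (fun y ↦ (PowerSeries.constantCoeff (f y))⁻¹) x :=
    DifferentiableAt.inv (by simpa using hf 0) h0
  induction k using Nat.strong_induction_on with
  | _ k ih =>
    rw [funext fun y ↦ PowerSeries.coeff_inv k (f y)]
    split_ifs with hk
    · exact hf0
    · refine hf0.neg.mul (DifferentiableAt.fun_sum fun p _ ↦ ?_)
      split_ifs with hp
      · exact (hf p.1).mul (ih p.2 hp)
      · exact differentiableAt_const 0

theorem differentiableAt_coeff_coeffStrip
    (hf : ∀ k, DifferentiableAt 𝕜 (fun y ↦ PowerSeries.coeff k (f y)) x)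
    (h0 : PowerSeries.constantCoeff (f x) ≠ 0) (h2 : PowerSeries.coeff 2 (f x)⁻¹ ≠ 0) (k : ℕ) :
    DifferentiableAt 𝕜 (fun y ↦ PowerSeries.coeff k (coeffStrip (f y))) x := by
  have hinv := differentiableAt_coeff_inv hf h0
  simpa only [coeffStrip, PowerSeries.coeff_mk, div_eq_mul_inv] using
    (hinv (k + 2)).fun_mul ((hinv 2).fun_inv h2)

theorem differentiableAt_coeff_inv_iterate_coeffStrip
    (hf : ∀ k, DifferentiableAt 𝕜 (fun y ↦ PowerSeries.coeff k (f y)) x)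
    (h0 : PowerSeries.constantCoeff (f x) ≠ 0) {i : ℕ}
    (hx : ∀ j < i, strippedOffDiag (f x) j ≠ 0) (k : ℕ) :
    DifferentiableAt 𝕜 (fun y ↦ PowerSeries.coeff k (coeffStrip^[i] (f y))⁻¹) x := by
  induction i generalizing f with
  | zero => exact differentiableAt_coeff_inv hf h0 k
  | succ i ih =>
    have h2 : PowerSeries.coeff 2 (f x)⁻¹ ≠ 0 := neg_ne_zero.1 (hx 0 (by omega))
    exact ih (differentiableAt_coeff_coeffStrip hf h0 h2) (by simp [constantCoeff_coeffStrip h2])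
      fun j hj ↦ hx (j + 1) (by omega)

open Filter in
theorem eventually_strippedOffDiag_ne_zero_and_norm_sub_le
    (hf : ∀ k, DifferentiableAt 𝕜 (fun y ↦ PowerSeries.coeff k (f y)) x)
    (h0 : PowerSeries.constantCoeff (f x) ≠ 0) {l : ℕ}
    (hx : ∀ i < l, strippedOffDiag (f x) i ≠ 0) :
    ∃ c > 0, ∀ᶠ y in 𝓝 x,
      (∀ i < l, strippedOffDiag (f y) i ≠ 0 ∧
        ‖strippedOffDiag (f x) i - strippedOffDiag (f y) i‖ ≤ c * ‖x - y‖) ∧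
      ∀ i < l + 1, ‖strippedDiag (f x) i - strippedDiag (f y) i‖ ≤ c * ‖x - y‖ := by
  have hinv {i k : ℕ} (hi : i < l + 1) :
      DifferentiableAt 𝕜 (fun y ↦ PowerSeries.coeff k (coeffStrip^[i] (f y))⁻¹) x :=
    differentiableAt_coeff_inv_iterate_coeffStrip hf h0 (fun j hj ↦ hx j (by omega)) k
  let A : E → Fin l → 𝕜 := fun y i ↦ strippedOffDiag (f y) i
  let B : E → Fin (l + 1) → 𝕜 := fun y i ↦ strippedDiag (f y) i
  have hA : DifferentiableAt 𝕜 A x := differentiableAt_pi.2 fun i ↦ (hinv (by omega)).neg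
  have hB : DifferentiableAt 𝕜 B x := differentiableAt_pi.2 fun i ↦ (hinv (by omega)).neg
  obtain ⟨c, hc, hAB⟩ := (hA.prodMk hB).isBigO_sub.exists_pos
  have hne : ∀ᶠ y in 𝓝 x, ∀ i, A y i ≠ 0 := eventually_all.2 fun i ↦
    (continuousAt_pi.1 hA.continuousAt i).eventually_ne (hx i i.2)
  refine ⟨c, hc, (hne.and hAB.bound).mono fun y ⟨hy, hle⟩ ↦ ?_⟩
  rw [norm_sub_rev, norm_sub_rev y, Prod.norm_def] at hle
  have hleA := (le_max_left _ _).trans hle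
  have hleB := (le_max_right _ _).trans hle
  exact ⟨fun i hi ↦ ⟨hy ⟨i, hi⟩, (norm_le_pi_norm _ (⟨i, hi⟩ : Fin l)).trans hleA⟩,
    fun i hi ↦ (norm_le_pi_norm _ (⟨i, hi⟩ : Fin (l + 1))).trans hleB⟩

end Differentiability

end JFraction

section Reversal

variable {R : Type*} [CommRing R]

theorem reflect_succ {p : R[X]} {N : ℕ} (hp : p.natDegree ≤ N) :
    p.reflect (N + 1) = X * p.reflect N := by
  simpa [add_comm] using reflect_mul (1 : R[X]) p (F := 1) (by simp) hp

theorem reflect_succ_X_mul {p : R[X]} {N : ℕ} (hp : p.natDegree ≤ N) :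
    (X * p).reflect (N + 1) = p.reflect N := by
  simpa [add_comm] using reflect_mul X p (F := 1) natDegree_X_le hp

theorem X_pow_dvd_reflect_iff {p : R[X]} {n d : ℕ} (hp : p.natDegree ≤ n + d) :
    PowerSeries.X ^ d ∣ (p.reflect (n + d) : R⟦X⟧) ↔ p.degree ≤ n := by
  rw [PowerSeries.X_pow_dvd_iff, degree_le_iff_coeff_zero]
  simp only [coeff_coe, coeff_reflect, Nat.cast_lt]
  constructor
  · intro h m hm
    rcases le_or_gt m (n + d) with hmN | hmN
    · have := h (n + d - m) (by omega)
      rwa [revAt_le (by omega), Nat.sub_sub_self hmN] at this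
    · exact coeff_eq_zero_of_natDegree_lt (hp.trans_lt hmN)
  · intro h i hi
    rw [revAt_le (by omega)]
    exact h _ (by omega)

/-- Sequences of polynomials satisfying the difference equation of the system `a`, `b` of
length `l`. -/
def IsSolution (l : ℕ) (a b : ℕ → R) (y : ℕ → R[X]) : Prop :=
  ∀ n, 1 ≤ n → n ≤ l → C (a n) * y (n + 1) + C (b n) * y n + y (n - 1) = X * y n

/-- The difference equation of the system `a`, `b` in the variable `z = 1/λ`, as satisfied by
`z^n y_n(1/z)`. -/
def IsReversedSolution (l : ℕ) (a b : ℕ → R) (y : ℕ → R⟦X⟧) : Prop :=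
  ∀ n < l, PowerSeries.C (a (n + 1)) * y (n + 2) =
    (1 - PowerSeries.C (b (n + 1)) * PowerSeries.X) * y (n + 1) - PowerSeries.X ^ 2 * y n

/-- The sequence `z^n y_n(1/z)` attached to polynomials `y_n` of degree at most `n`. -/
noncomputable def reversal (y : ℕ → R[X]) (n : ℕ) : R⟦X⟧ :=
  ((y n).reflect n : R[X])

/-- The polynomial `M_1 + M_2 z + ⋯ + M_{2l} z^{2l-1}` in `z = 1/λ`. -/
noncomputable def weylPolynomial (l : ℕ) (M : ℕ → R) : R[X] :=
  (PowerSeries.mk fun k ↦ M (k + 1)).trunc (2 * l)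

theorem constantCoeff_weylPolynomial (l : ℕ) (M : ℕ → R) :
    PowerSeries.constantCoeff (weylPolynomial (l + 1) M : R⟦X⟧) = M 1 := by
  simp [weylPolynomial, PowerSeries.coeff_trunc]

/-- The polynomial `λ^{2l} q + p ∑ M_k λ^{2l-k}` whose degree defines the Weyl coefficients. -/
noncomputable def weylCombination (l : ℕ) (M : ℕ → R) (p q : R[X]) : R[X] :=
  X ^ (2 * l) * q + p * ∑ k ∈ Finset.Icc 1 (2 * l), C (M k) * X ^ (2 * l - k)

theorem natDegree_sum_Icc_C_mul_X_pow_le (l : ℕ) (M : ℕ → R) :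
    (∑ k ∈ Finset.Icc 1 (2 * l), C (M k) * X ^ (2 * l - k)).natDegree ≤ 2 * l :=
  natDegree_sum_le_of_forall_le _ _ fun _ _ ↦
    (natDegree_C_mul_X_pow_le _ _).trans (Nat.sub_le _ _)

theorem reflect_sum_Icc_C_mul_X_pow (l : ℕ) (M : ℕ → R) :
    (∑ k ∈ Finset.Icc 1 (2 * l), C (M k) * X ^ (2 * l - k)).reflect (2 * l) =
      X * weylPolynomial l M := by
  have hsum := map_sum (AddMonoidHom.mk' (reflect (2 * l)) fun p q : R[X] ↦ reflect_add p q _)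
    (fun k ↦ C (M k) * X ^ (2 * l - k)) (Finset.Icc 1 (2 * l))
  simp only [AddMonoidHom.mk'_apply, reflect_C_mul_X_pow] at hsum
  rw [hsum, weylPolynomial, PowerSeries.trunc_apply, Finset.mul_sum,
    ← Finset.Ico_succ_right_eq_Icc, Nat.Ico_zero_eq_range, Finset.sum_Ico_eq_sum_range]
  refine Finset.sum_congr (by simp) fun k hk ↦ ?_
  have hk' : k < 2 * l := by simpa using hk
  rw [revAt_le (by omega), Nat.sub_sub_self (by omega), PowerSeries.coeff_mk,
    ← C_mul_X_pow_eq_monomial, add_comm 1]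
  ring

theorem natDegree_weylCombination_le {p q : R[X]} {n : ℕ} (hp : p.natDegree ≤ n)
    (hq : q.natDegree ≤ n) (l : ℕ) (M : ℕ → R) :
    (weylCombination l M p q).natDegree ≤ 2 * l + n :=
  natDegree_add_le_of_degree_le (natDegree_mul_le_of_le (natDegree_X_pow_le _) hq)
    ((natDegree_mul_le_of_le hp (natDegree_sum_Icc_C_mul_X_pow_le l M)).trans_eq (add_comm _ _))

theorem reflect_weylCombination {p q : R[X]} {n : ℕ} (hp : p.natDegree ≤ n)
    (hq : q.natDegree ≤ n) (l : ℕ) (M : ℕ → R) :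
    (weylCombination l M p q).reflect (2 * l + n) =
      q.reflect n + p.reflect n * (X * weylPolynomial l M) := by
  rw [weylCombination, reflect_add, reflect_mul _ _ (natDegree_X_pow_le _) hq, add_comm (2 * l) n,
    reflect_mul _ _ hp (natDegree_sum_Icc_C_mul_X_pow_le l M), reflect_sum_Icc_C_mul_X_pow,
    reflect_monomial, revAt_le le_rfl, Nat.sub_self, pow_zero, one_mul]

variable {l : ℕ} {a b : ℕ → R}

theorem IsSolution.isReversedSolution_reversal {y : ℕ → R[X]} (hy : IsSolution l a b y)
    (hdeg : ∀ n ≤ l + 1, (y n).natDegree ≤ n) :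
    IsReversedSolution l a b (reversal y) := by
  intro n hn
  have h := congrArg (reflect (n + 2)) (hy (n + 1) (by omega) (by omega))
  have hd := hdeg n (by omega)
  rw [reflect_add, reflect_add, reflect_C_mul, reflect_C_mul, add_tsub_cancel_right,
    reflect_succ_X_mul (hdeg (n + 1) (by omega)), reflect_succ (hdeg (n + 1) (by omega)),
    reflect_succ (hd.trans (by omega)), reflect_succ hd] at h
  have h' := congrArg (fun p : R[X] ↦ (p : R⟦X⟧)) h
  simp only [Polynomial.coe_add, Polynomial.coe_mul, Polynomial.coe_C, Polynomial.coe_X] at h'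
  simp only [reversal]
  linear_combination h'

theorem IsReversedSolution.add_mul {y z : ℕ → R⟦X⟧} (hy : IsReversedSolution l a b y)
    (hz : IsReversedSolution l a b z) (f : R⟦X⟧) :
    IsReversedSolution l a b fun n ↦ y n + z n * f := by
  intro n hn
  linear_combination hy n hn + f * hz n hn

end Reversal

section SolutionsOverField

variable {K : Type*} [Field K] {l : ℕ} {a b : ℕ → K}

theorem IsSolution.natDegree_le {y : ℕ → K[X]} (hy : IsSolution l a b y)
    (ha : ∀ n, 1 ≤ n → n ≤ l → a n ≠ 0) (h0 : (y 0).natDegree ≤ 0) (h1 : (y 1).natDegree ≤ 1) :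
    ∀ n ≤ l + 1, (y n).natDegree ≤ n := by
  intro n hn
  induction n using Nat.twoStepInduction with
  | zero => exact h0
  | one => exact h1
  | more n ih ih' =>
    have hrec : C (a (n + 1)) * y (n + 2) = (X - C (b (n + 1))) * y (n + 1) - y n := by
      linear_combination (by simpa using hy (n + 1) (by omega) (by omega) :
        C (a (n + 1)) * y (n + 2) + C (b (n + 1)) * y (n + 1) + y n = X * y (n + 1))
    rw [← natDegree_C_mul (ha (n + 1) (by omega) (by omega)), hrec]
    refine natDegree_sub_le_of_le (natDegree_mul_le_of_le (natDegree_X_sub_C_le _) (ih' (by omega)))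
      (ih (by omega)) |>.trans ?_
    omega

theorem IsReversedSolution.eq_jFraction_mul {y : ℕ → K⟦X⟧} (hy : IsReversedSolution l a b y)
    (ha : ∀ n, 1 ≤ n → n ≤ l → a n ≠ 0)
    (h1 : y 1 = PowerSeries.X ^ 2 * jFraction a b l 1 * y 0) :
    ∀ n ≤ l, y (n + 1) = PowerSeries.X ^ 2 * jFraction a b (l - n) (n + 1) * y n := by
  intro n hn
  induction n with
  | zero => exact h1
  | succ n ih =>
    specialize ih (by omega)
    obtain ⟨m, hm⟩ : ∃ m, l - n = m + 1 := ⟨l - n - 1, by omega⟩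
    rw [hm] at ih
    rw [show l - (n + 1) = m by omega]
    have hw := PowerSeries.mul_inv_cancel (jFraction a b (m + 1) (n + 1))
      (by simp [constantCoeff_jFraction_succ])
    rw [inv_jFraction_succ] at hw
    have ha' : PowerSeries.C (a (n + 1)) ≠ 0 := by simpa using ha (n + 1) (by omega) (by omega)
    have hyn := hy n (by omega)
    refine mul_left_cancel₀ ha' ?_
    linear_combination hyn + PowerSeries.X ^ 2 * y n * hw +
      (1 - PowerSeries.C (b (n + 1)) * PowerSeries.X -
        PowerSeries.C (a (n + 1)) * PowerSeries.X ^ 2 * jFraction a b m (n + 2)) * ih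

theorem IsReversedSolution.associated_X {y : ℕ → K⟦X⟧}
    (hy : IsReversedSolution l a b y) (ha : ∀ n, 1 ≤ n → n ≤ l → a n ≠ 0)
    (h1 : Associated PowerSeries.X (y 1)) :
    ∀ n ≤ l, Associated PowerSeries.X (y (n + 1)) := by
  intro n hn
  induction n with
  | zero => exact h1
  | succ n ih =>
    obtain ⟨u, hu⟩ := ih (by omega)
    have hau : IsUnit (PowerSeries.C (a (n + 1))) :=
      (ha (n + 1) (by omega) (by omega)).isUnit.map PowerSeries.C
    have hv : IsUnit ((1 - PowerSeries.C (b (n + 1)) * PowerSeries.X) * (u : K⟦X⟧) -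
        PowerSeries.X * y n) := by
      have hu0 := u.isUnit.map PowerSeries.constantCoeff
      simpa [PowerSeries.isUnit_iff_constantCoeff, sub_mul, mul_assoc] using hu0
    refine (associated_mul_unit_right _ _ hv).trans (.trans (.of_eq ?_)
      (associated_unit_mul_left _ _ hau))
    rw [hy n (by omega), ← hu]
    ring

theorem reversal_succ_eq_neg_mul_jFraction {P Q : ℕ → K[X]}
    (hP : IsReversedSolution l a b (reversal P)) (hQ : IsReversedSolution l a b (reversal Q))
    (ha : ∀ n, 1 ≤ n → n ≤ l → a n ≠ 0)
    (hP0 : P 0 = 0) (hP1 : P 1 = 1) (hQ0 : Q 0 = 1) (hQ1 : Q 1 = 0) :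
    reversal Q (l + 1) = -(reversal P (l + 1) * (PowerSeries.X * jFraction a b l 1)) := by
  have hinit : reversal Q 1 + reversal P 1 * (PowerSeries.X * jFraction a b l 1) =
      PowerSeries.X ^ 2 * jFraction a b l 1 *
        (reversal Q 0 + reversal P 0 * (PowerSeries.X * jFraction a b l 1)) := by
    simp only [reversal, hP0, hP1, hQ0, hQ1, reflect_zero, reflect_one, pow_zero, pow_one,
      Polynomial.coe_zero, Polynomial.coe_one, Polynomial.coe_X]
    ring
  have h := (hQ.add_mul hP (PowerSeries.X * jFraction a b l 1)).eq_jFraction_mul ha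
    hinit l le_rfl
  simp only [tsub_self, jFraction, mul_zero, zero_mul] at h
  exact eq_neg_of_add_eq_zero_left h

theorem degree_weylCombination_le_iff {P Q : ℕ → K[X]}
    (ha : ∀ n, 1 ≤ n → n ≤ l + 1 → a n ≠ 0) (hP : IsSolution (l + 1) a b P)
    (hQ : IsSolution (l + 1) a b Q) (hP0 : P 0 = 0) (hP1 : P 1 = 1) (hQ0 : Q 0 = 1) (hQ1 : Q 1 = 0)
    (M : ℕ → K) :
    (weylCombination (l + 1) M (P (l + 2)) (Q (l + 2))).degree ≤ (l : WithBot ℕ) ↔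
      ∀ k < 2 * (l + 1), PowerSeries.coeff k (jFraction a b (l + 1) 1) =
        PowerSeries.coeff k (weylPolynomial (l + 1) M : K⟦X⟧) := by
  have hdegP := hP.natDegree_le ha (by simp [hP0]) (by simp [hP1])
  have hdegQ := hQ.natDegree_le ha (by simp [hQ0]) (by simp [hQ1])
  have hPr := hP.isReversedSolution_reversal hdegP
  have hQr := hQ.isReversedSolution_reversal hdegQ
  have hassoc : Associated PowerSeries.X (reversal P (l + 2)) :=
    hPr.associated_X ha (by simp [reversal, hP1]) _ le_rfl
  have hrev := reflect_weylCombination (hdegP (l + 2) le_rfl) (hdegQ (l + 2) le_rfl) (l + 1) M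
  have hdeg := natDegree_weylCombination_le (hdegP (l + 2) le_rfl) (hdegQ (l + 2) le_rfl) (l + 1) M
  have hQw := reversal_succ_eq_neg_mul_jFraction hPr hQr ha hP0 hP1 hQ0 hQ1
  set S := weylCombination (l + 1) M (P (l + 2)) (Q (l + 2))
  have hS : (S.reflect (l + (2 * (l + 1) + 2)) : K⟦X⟧) = reversal P (l + 2) *
      (PowerSeries.X * ((weylPolynomial (l + 1) M : K⟦X⟧) - jFraction a b (l + 1) 1)) := by
    rw [show l + (2 * (l + 1) + 2) = 2 * (l + 1) + (l + 2) by omega, hrev]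
    simp only [reversal, Polynomial.coe_add, Polynomial.coe_mul, Polynomial.coe_X] at hQw ⊢
    linear_combination hQw
  -- `reversal P (l + 2)` is `X` times a unit, so two powers of `X` cancel in the divisibility.
  rw [← X_pow_dvd_reflect_iff (d := 2 * (l + 1) + 2) (by omega), hS,
    ← (hassoc.mul_right _).dvd_iff_dvd_right, pow_succ', pow_succ',
    mul_dvd_mul_iff_left PowerSeries.X_ne_zero, mul_dvd_mul_iff_left PowerSeries.X_ne_zero,
    ← forall_coeff_eq_iff_X_pow_dvd_sub]
  simp only [eq_comm]

/-- The solution of the difference equation with initial values `y₀`, `y₁`. -/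
noncomputable def solution (a b : ℕ → K) (y₀ y₁ : K[X]) : ℕ → K[X]
  | 0 => y₀
  | 1 => y₁
  | n + 2 => C (a (n + 1))⁻¹ *
      ((X - C (b (n + 1))) * solution a b y₀ y₁ (n + 1) - solution a b y₀ y₁ n)

theorem isSolution_solution (ha : ∀ n, 1 ≤ n → n ≤ l → a n ≠ 0) (y₀ y₁ : K[X]) :
    IsSolution l a b (solution a b y₀ y₁) := by
  rintro (_ | n) h1 hn
  · omega
  · have hC : C (a (n + 1)) * C (a (n + 1))⁻¹ = (1 : K[X]) := by
      rw [← C_mul, mul_inv_cancel₀ (ha _ h1 hn), C_1]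
    rw [add_tsub_cancel_right, solution]
    linear_combination ((X - C (b (n + 1))) * solution a b y₀ y₁ (n + 1) -
      solution a b y₀ y₁ n) * hC

end SolutionsOverField

section Recovery

variable {K : Type*} [Field K]

/-- The entry `a_n` (`1 ≤ n ≤ l`) of the system with `a_l = 1` that is reconstructed from
`M_1, …, M_{2l}`. -/
noncomputable def recoveredOffDiag (l : ℕ) (M : ℕ → K) (n : ℕ) : K :=
  if n = l then 1 else strippedOffDiag (weylPolynomial l M : K⟦X⟧) (n - 1)

/-- The entry `b_n` (`1 ≤ n ≤ l`) of the system that is reconstructed from `M_1, …, M_{2l}`. -/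
noncomputable def recoveredDiag (l : ℕ) (M : ℕ → K) (n : ℕ) : K :=
  strippedDiag (weylPolynomial l M : K⟦X⟧) (n - 1)

theorem isWeylCoeffs_iff_forall_coeff_jFraction_eq {l : ℕ} {a b : ℕ → ℂ}
    (ha : ∀ n, 1 ≤ n → n ≤ l + 1 → a n ≠ 0) (M : ℕ → ℂ) :
    IsWeylCoeffs (l + 1) a b M ↔
      ∀ k < 2 * (l + 1), PowerSeries.coeff k (jFraction a b (l + 1) 1) =
        PowerSeries.coeff k (weylPolynomial (l + 1) M : ℂ⟦X⟧) := by
  constructor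
  · rintro ⟨P, Q, hP0, hP1, hQ0, hQ1, hP, hQ, h⟩
    exact (degree_weylCombination_le_iff ha hP hQ hP0 hP1 hQ0 hQ1 M).1 h
  · intro h
    have hP : IsSolution (l + 1) a b (solution a b 0 1) := isSolution_solution ha 0 1
    have hQ : IsSolution (l + 1) a b (solution a b 1 0) := isSolution_solution ha 1 0
    exact ⟨_, _, rfl, rfl, rfl, rfl, hP, hQ,
      (degree_weylCombination_le_iff ha hP hQ rfl rfl rfl rfl M).2 h⟩

theorem isWeylCoeffs_iff_eq_recovered {l : ℕ} {a b : ℕ → ℂ}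
    (ha : ∀ n, 1 ≤ n → n ≤ l → a n ≠ 0) (hal : a (l + 1) = 1) (M : ℕ → ℂ) :
    IsWeylCoeffs (l + 1) a b M ↔ M 1 = 1 ∧ ∀ n, 1 ≤ n → n ≤ l + 1 →
      a n = recoveredOffDiag (l + 1) M n ∧ b n = recoveredDiag (l + 1) M n := by
  have ha' : ∀ n, 1 ≤ n → n ≤ l + 1 → a n ≠ 0 := fun n h1 hn ↦ by
    rcases hn.lt_or_eq with hn | rfl
    · exact ha n h1 (by omega)
    · simp [hal]
  rw [isWeylCoeffs_iff_forall_coeff_jFraction_eq ha',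
    forall_coeff_jFraction_eq_iff a b fun i hi ↦ ha _ (by omega) (by omega),
    constantCoeff_weylPolynomial]
  refine and_congr_right fun _ ↦ ⟨fun ⟨hA, hB⟩ n h1 hn ↦ ?_, fun h ↦ ⟨fun i hi ↦ ?_, fun i hi ↦ ?_⟩⟩
  · obtain ⟨i, rfl⟩ := Nat.exists_eq_add_of_le h1
    refine ⟨?_, by simpa [recoveredDiag] using hB i (by omega)⟩
    rcases hn.eq_or_lt with hn | hn
    · rw [recoveredOffDiag, if_pos hn, hn, hal]
    · simpa [recoveredOffDiag, hn.ne] using hA i (by omega)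
  · have hi' : 1 + i ≠ l + 1 := by omega
    simpa [recoveredOffDiag, hi'] using (h (1 + i) (by omega) (by omega)).1
  · simpa [recoveredDiag] using (h (1 + i) (by omega) (by omega)).2

theorem exists_stripped_weylPolynomial_stable {𝕜 : Type*} [NontriviallyNormedField 𝕜]
    (m : ℕ) {l : ℕ} {M : ℕ → 𝕜}
    (h0 : PowerSeries.constantCoeff (weylPolynomial m M : 𝕜⟦X⟧) ≠ 0)
    (hM : ∀ i < l, strippedOffDiag (weylPolynomial m M : 𝕜⟦X⟧) i ≠ 0) :
    ∃ ε > (0 : ℝ), ∃ c > (0 : ℝ), ∀ (M' : ℕ → 𝕜) (δ : ℝ), 0 ≤ δ → δ ≤ ε →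
      (∀ k < 2 * m, ‖M (k + 1) - M' (k + 1)‖ ≤ δ) →
        (∀ i < l, strippedOffDiag (weylPolynomial m M' : 𝕜⟦X⟧) i ≠ 0 ∧
          ‖strippedOffDiag (weylPolynomial m M : 𝕜⟦X⟧) i -
            strippedOffDiag (weylPolynomial m M' : 𝕜⟦X⟧) i‖ ≤ c * δ) ∧
        ∀ i < l + 1, ‖strippedDiag (weylPolynomial m M : 𝕜⟦X⟧) i -
          strippedDiag (weylPolynomial m M' : 𝕜⟦X⟧) i‖ ≤ c * δ := by
  let r : (ℕ → 𝕜) → Fin (2 * m) → 𝕜 := fun N i ↦ N (i + 1)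
  let f : (Fin (2 * m) → 𝕜) → 𝕜⟦X⟧ := fun v ↦
    PowerSeries.mk fun k ↦ if hk : k < 2 * m then v ⟨k, hk⟩ else 0
  have hf (N : ℕ → 𝕜) : f (r N) = weylPolynomial m N := by
    ext k
    simp [f, r, weylPolynomial, PowerSeries.coeff_trunc]
  have hfdiff (k : ℕ) : DifferentiableAt 𝕜 (fun v ↦ PowerSeries.coeff k (f v)) (r M) := by
    by_cases hk : k < 2 * m
    · simpa [f, hk] using differentiableAt_apply _ _
    · simp [f, hk]
  simp only [← hf] at h0 hM ⊢
  obtain ⟨c, hc, hev⟩ := eventually_strippedOffDiag_ne_zero_and_norm_sub_le hfdiff h0 hM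
  obtain ⟨ε, hε, hball⟩ := Metric.nhds_basis_closedBall.eventually_iff.1 hev
  refine ⟨ε, hε, c, hc, fun M' δ hδ0 hδ hMM' ↦ ?_⟩
  have hdist : ‖r M - r M'‖ ≤ δ := (pi_norm_le_iff_of_nonneg hδ0).2 fun i ↦ hMM' i i.2
  have hcδ : c * ‖r M - r M'‖ ≤ c * δ := mul_le_mul_of_nonneg_left hdist hc.le
  obtain ⟨hA, hB⟩ := hball (mem_closedBall_iff_norm'.2 (hdist.trans hδ))
  exact ⟨fun i hi ↦ (hA i hi).imp_right (·.trans hcδ), fun i hi ↦ (hB i hi).trans hcδ⟩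

theorem exists_recovered_stable {𝕜 : Type*} [NontriviallyNormedField 𝕜] {l : ℕ} {M : ℕ → 𝕜}
    (hM1 : M 1 ≠ 0) (hM : ∀ n, 1 ≤ n → n ≤ l → recoveredOffDiag (l + 1) M n ≠ 0) :
    ∃ ε > (0 : ℝ), ∃ c > (0 : ℝ), ∀ (M' : ℕ → 𝕜) (δ : ℝ), δ ≤ ε →
      (∀ k < 2 * (l + 1), ‖M (k + 1) - M' (k + 1)‖ ≤ δ) →
        (∀ n, 1 ≤ n → n ≤ l → recoveredOffDiag (l + 1) M' n ≠ 0) ∧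
        ∀ n, 1 ≤ n → n ≤ l + 1 →
          ‖recoveredOffDiag (l + 1) M n - recoveredOffDiag (l + 1) M' n‖ ≤ c * δ ∧
          ‖recoveredDiag (l + 1) M n - recoveredDiag (l + 1) M' n‖ ≤ c * δ := by
  have hoff (N : ℕ → 𝕜) {n : ℕ} (hn : n ≤ l) : recoveredOffDiag (l + 1) N n =
      strippedOffDiag (weylPolynomial (l + 1) N : 𝕜⟦X⟧) (n - 1) := if_neg (by omega)
  obtain ⟨ε, hε, c, hc, hstable⟩ := exists_stripped_weylPolynomial_stable (l + 1) (l := l)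
    (by rwa [constantCoeff_weylPolynomial]) fun i hi ↦ hoff M hi ▸ hM (i + 1) (by omega) hi
  refine ⟨ε, hε, c, hc, fun M' δ hδ hMM' ↦ ?_⟩
  have hδ0 : 0 ≤ δ := (norm_nonneg _).trans (hMM' 0 (by omega))
  obtain ⟨hA, hB⟩ := hstable M' δ hδ0 hδ hMM'
  refine ⟨fun n h1 hn ↦ hoff M' hn ▸ (hA (n - 1) (by omega)).1,
    fun n h1 hn ↦ ⟨?_, hB (n - 1) (by omega)⟩⟩
  rcases hn.eq_or_lt with rfl | hn
  · simpa [recoveredOffDiag] using mul_nonneg hc.le hδ0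
  · rw [hoff M (by omega), hoff M' (by omega)]
    exact (hA (n - 1) (by omega)).2

end Recovery

/-- Local solvability and stability of the inverse problem by the Weyl coefficients:
if `M 1, …, M (2l)` are the Weyl coefficients of a system with `a n ≠ 0` for `n = 1,…,l-1`
and `a l = 1`, then for all sufficiently small perturbations `M̃` of the Weyl coefficients
(with `M̃ 1 = 1`, `max_{2 ≤ k ≤ 2l} |M k - M̃ k| = δ ≤ ε`) there is a unique perturbed system
with Weyl coefficients `M̃`, and its coefficients satisfy `|a n - ã n| ≤ C δ`,
`|b n - b̃ n| ≤ C δ`. -/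
theorem weyl_coefficients_local_solvability_stability (l : ℕ) (hl : 1 ≤ l)
    (a b : ℕ → ℂ)
    (ha : ∀ n, 1 ≤ n → n ≤ l - 1 → a n ≠ 0) (hal : a l = 1)
    (M : ℕ → ℂ) (hM : IsWeylCoeffs l a b M) :
    ∃ ε > (0 : ℝ), ∃ Cst > (0 : ℝ),
      ∀ (M' : ℕ → ℂ) (δ : ℝ), M' 1 = 1 → δ ≤ ε →
        (∀ k, 2 ≤ k → k ≤ 2 * l → ‖M k - M' k‖ ≤ δ) →
        ∃ a' b' : ℕ → ℂ,
          (∀ n, 1 ≤ n → n ≤ l - 1 → a' n ≠ 0) ∧ a' l = 1 ∧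
          IsWeylCoeffs l a' b' M' ∧
          (∀ n, 1 ≤ n → n ≤ l →
            ‖a n - a' n‖ ≤ Cst * δ ∧ ‖b n - b' n‖ ≤ Cst * δ) ∧
          (∀ a'' b'' : ℕ → ℂ,
            (∀ n, 1 ≤ n → n ≤ l - 1 → a'' n ≠ 0) → a'' l = 1 →
            IsWeylCoeffs l a'' b'' M' →
            ∀ n, 1 ≤ n → n ≤ l → a'' n = a' n ∧ b'' n = b' n) := by
  obtain ⟨l, rfl⟩ := Nat.exists_eq_add_of_le' hl
  rw [add_tsub_cancel_right] at ha ⊢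
  obtain ⟨hM1, hab⟩ := (isWeylCoeffs_iff_eq_recovered ha hal M).1 hM
  obtain ⟨ε, hε, c, hc, hstable⟩ := exists_recovered_stable (l := l)
    (hM1 ▸ one_ne_zero) fun n h1 hn ↦ (hab n h1 (by omega)).1 ▸ ha n h1 hn
  refine ⟨ε, hε, c, hc, fun M' δ hM'1 hδ hMM' ↦ ?_⟩
  have hδ0 : 0 ≤ δ := (norm_nonneg _).trans (hMM' 2 le_rfl (by omega))
  obtain ⟨hne, hle⟩ := hstable M' δ hδ fun k hk ↦ by
    rcases k.eq_zero_or_pos with rfl | hk0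
    · simpa [hM1, hM'1] using hδ0
    · exact hMM' (k + 1) (by omega) (by omega)
  have hlast : recoveredOffDiag (l + 1) M' (l + 1) = 1 := if_pos rfl
  refine ⟨recoveredOffDiag (l + 1) M', recoveredDiag (l + 1) M', hne, hlast, ?_, ?_, ?_⟩
  · exact (isWeylCoeffs_iff_eq_recovered hne hlast M').2 ⟨hM'1, fun _ _ _ ↦ ⟨rfl, rfl⟩⟩
  · intro n h1 hn
    obtain ⟨han, hbn⟩ := hab n h1 hn
    exact han ▸ hbn ▸ hle n h1 hn
  · exact fun a'' b'' ha'' hal'' hM'' ↦ ((isWeylCoeffs_iff_eq_recovered ha'' hal'' M').1 hM'').2
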